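/- Let λ ≥ 2 and suppose θ ∈ S¹ is λ-shrinkable. Then there is a unique geodesic ray ⟨g_i⟩ in F₂ which is a λ-shrinking sequence of θ. Moreover, for this geodesic ray the sequence i ↦ ‖ρ_λ(g_i)θ‖ is strictly monotone decreasing. -/

import Mathlib

noncomputable section

abbrev F2 := FreeGroup Bool

def gh : F2 := FreeGroup.of true
def gv : F2 := FreeGroup.of false

def hmat (l : ℝ) : Matrix.SpecialLinearGroup (Fin 2) ℝ :=
  ⟨!![1, l; 0, 1], by norm_num [Matrix.det_fin_two_of]⟩

def vmat (l : ℝ) : Matrix.SpecialLinearGroup (Fin 2) ℝ :=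
  ⟨!![1, 0; l, 1], by norm_num [Matrix.det_fin_two_of]⟩

def rho (l : ℝ) : F2 →* Matrix.SpecialLinearGroup (Fin 2) ℝ :=
  FreeGroup.lift fun b => if b then hmat l else vmat l

def act (l : ℝ) (g : F2) (x : Fin 2 → ℝ) : Fin 2 → ℝ :=
  (rho l g).val.mulVec x

def nrm (x : Fin 2 → ℝ) : ℝ := Real.sqrt (x 0 ^ 2 + x 1 ^ 2)

def Circ : Set (Fin 2 → ℝ) := {x | nrm x = 1}

def gens : Set F2 := {gh, gv, gh⁻¹, gv⁻¹}

def ShrinkSet (l : ℝ) (g : F2) : Set (Fin 2 → ℝ) :=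
  {x | x ∈ Circ ∧ nrm (act l g x) < 1}

def ExpSet (l : ℝ) (g : F2) : Set (Fin 2 → ℝ) :=
  {x | x ∈ Circ ∧ 1 < nrm (act l g x)}

def IsGeodesicRay (g : ℕ → F2) : Prop :=
  g 0 = 1 ∧ (∀ n, g (n + 1) * (g n)⁻¹ ∈ gens) ∧ ∀ n, g (n + 2) * (g n)⁻¹ ≠ 1

def IsGeodesicSegment (g : ℕ → F2) (N : ℕ) : Prop :=
  g 0 = 1 ∧ (∀ n, n + 1 ≤ N → g (n + 1) * (g n)⁻¹ ∈ gens) ∧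
    ∀ n, n + 2 ≤ N → g (n + 2) * (g n)⁻¹ ≠ 1

def IsShrinkingSeq (l : ℝ) (g : ℕ → F2) (θ : Fin 2 → ℝ) : Prop :=
  ∀ ε : ℝ, 0 < ε → ∃ i : ℕ, nrm (act l (g i) θ) < ε

def Shrinkable (l : ℝ) (θ : Fin 2 → ℝ) : Prop :=
  ∀ ε : ℝ, 0 < ε → ∃ g : F2, nrm (act l g θ) < ε

def Renormalizable (l : ℝ) (θ : Fin 2 → ℝ) : Prop :=
  Shrinkable l θ ∧ ∀ k : F2, ∀ c : ℝ, act l (k * (gh * gv⁻¹) * k⁻¹) θ ≠ c • θ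

abbrev SP := Bool × Bool

def Quad (s : SP) : Set (Fin 2 → ℝ) :=
  {x | (if s.1 then 0 < x 0 else x 0 < 0) ∧ (if s.2 then 0 < x 1 else x 1 < 0)}

def letterSigma : Bool × Bool → SP → SP
  | (true, true), s => (s.2, s.2)
  | (false, true), s => (s.1, s.1)
  | (true, false), s => (!s.2, s.2)
  | (false, false), s => (s.1, !s.1)

def SigmaAct (g : F2) : SP → SP :=
  (FreeGroup.toWord g).foldr (fun w acc => letterSigma w ∘ acc) id

def gammaAut : F2 →* F2 := FreeGroup.lift fun b => if b then gv⁻¹ else gh⁻¹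

def rPerm (s : SP) : SP := (!s.2, s.1)

def rPermInv (s : SP) : SP := (s.2, !s.1)

def shiftRay (g : ℕ → F2) : ℕ → F2 := fun n => g (n + 1) * (g 1)⁻¹

def TailEquiv (g g' : ℕ → F2) : Prop :=
  ∃ m n : ℕ, shiftRay^[m] g = shiftRay^[n] g'

def seqPow (a : F2) : ℕ → F2 := fun n => a ^ n

def seqPer (a b : F2) : ℕ → F2 := fun n =>
  if n % 2 = 0 then (b * a) ^ (n / 2) else a * (b * a) ^ (n / 2)

def Cond1 (g : ℕ → F2) : Prop :=
  ¬ TailEquiv g (seqPow gh) ∧ ¬ TailEquiv g (seqPow gh⁻¹) ∧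
    ¬ TailEquiv g (seqPow gv) ∧ ¬ TailEquiv g (seqPow gv⁻¹)

def Cond2 (g : ℕ → F2) : Prop :=
  ¬ TailEquiv g (seqPer gh gv⁻¹) ∧ ¬ TailEquiv g (seqPer gh⁻¹ gv)

def adjSum {V : Type} (G : SimpleGraph V) (f : V → ℝ) (v : V) : ℝ :=
  ∑ᶠ w ∈ G.neighborSet v, f w

def BoundedValance {V : Type} (G : SimpleGraph V) : Prop :=
  ∃ D : ℕ, ∀ v, (G.neighborSet v).Finite ∧ (G.neighborSet v).ncard ≤ D

def BipartWith {V : Type} (G : SimpleGraph V) (A : Set V) : Prop :=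
  ∀ v w, G.Adj v w → (v ∈ A ↔ w ∉ A)

def Hop {V : Type} (G : SimpleGraph V) (A : Set V) (k : ℤ) (f : V → ℝ) : V → ℝ :=
  fun v => f v + (k : ℝ) * Set.indicator A (adjSum G f) v

def Vop {V : Type} (G : SimpleGraph V) (A : Set V) (k : ℤ) (f : V → ℝ) : V → ℝ :=
  fun v => f v + (k : ℝ) * Set.indicator Aᶜ (adjSum G f) v

def QuadV {V : Type} (A : Set V) (s : SP) : Set (V → ℝ) :=
  {f | (∀ v ∈ A, f v = 0 ∨ (if s.1 then 0 < f v else f v < 0)) ∧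
       ∀ v, v ∉ A → f v = 0 ∨ (if s.2 then 0 < f v else f v < 0)}

def valance {V : Type} (G : SimpleGraph V) (v : V) : ℕ := (G.neighborSet v).ncard

def evec {V : Type} (v : V) : V → ℝ := Set.indicator {v} 1

def InSpoke {V : Type} (G : SimpleGraph V) (x : V) : Prop :=
  ∃ k : ℕ, 2 ≤ k ∧ ∃ c : ℕ → V,
    (∀ i j, 1 ≤ i → i ≤ k → 1 ≤ j → j ≤ k → c i = c j → i = j) ∧
    valance G (c 1) = 1 ∧
    (∀ i, 2 ≤ i → i ≤ k - 1 →
      valance G (c i) = 2 ∧ G.Adj (c i) (c (i - 1)) ∧ G.Adj (c i) (c (i + 1))) ∧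
    ∃ i, 1 ≤ i ∧ i ≤ k ∧ x = c i

def qq (y : Fin 2 → ℝ) : ℝ := y 0 ^ 2 + y 1 ^ 2

theorem nrm_lt_iff' (y z : Fin 2 → ℝ) : nrm y < nrm z ↔ qq y < qq z := by
  unfold nrm qq
  exact Real.sqrt_lt_sqrt_iff (by positivity)

theorem nrm_le_iff' (y z : Fin 2 → ℝ) : nrm y ≤ nrm z ↔ qq y ≤ qq z := by
  unfold nrm qq
  exact Real.sqrt_le_sqrt_iff (by positivity)

theorem act_mul' (l : ℝ) (a b : F2) (y : Fin 2 → ℝ) : act l (a * b) y = act l a (act l b y) := by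
  unfold act
  rw [Matrix.mulVec_mulVec, map_mul, Matrix.SpecialLinearGroup.coe_mul]

theorem act_one' (l : ℝ) (y : Fin 2 → ℝ) : act l 1 y = y := by
  simp [act]

theorem act_zero' (l : ℝ) (g : F2) : act l g 0 = 0 := by
  simp [act]

theorem qq_gh (l : ℝ) (y : Fin 2 → ℝ) : qq (act l gh y) = (y 0 + l * y 1) ^ 2 + y 1 ^ 2 := by
  simp [act, qq, gh, rho, hmat, Matrix.mulVec, dotProduct, Fin.sum_univ_two]

theorem qq_gv (l : ℝ) (y : Fin 2 → ℝ) : qq (act l gv y) = y 0 ^ 2 + (l * y 0 + y 1) ^ 2 := by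
  simp [act, qq, gv, rho, vmat, Matrix.mulVec, dotProduct, Fin.sum_univ_two]

theorem qq_ghi (l : ℝ) (y : Fin 2 → ℝ) : qq (act l gh⁻¹ y) = (y 0 - l * y 1) ^ 2 + y 1 ^ 2 := by
  have e : (rho l gh⁻¹).val = (hmat l).val.adjugate := by
    rw [map_inv, Matrix.SpecialLinearGroup.coe_inv]
    simp [rho, gh]
  unfold act
  rw [e]
  simp [qq, hmat, Matrix.mulVec, dotProduct, Fin.sum_univ_two, Matrix.adjugate_fin_two]
  ring

theorem qq_gvi (l : ℝ) (y : Fin 2 → ℝ) : qq (act l gv⁻¹ y) = y 0 ^ 2 + (- l * y 0 + y 1) ^ 2 := by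
  have e : (rho l gv⁻¹).val = (vmat l).val.adjugate := by
    rw [map_inv, Matrix.SpecialLinearGroup.coe_inv]
    simp [rho, gv]
  unfold act
  rw [e]
  simp [qq, vmat, Matrix.mulVec, dotProduct, Fin.sum_univ_two, Matrix.adjugate_fin_two]

theorem sc1 (l a b : ℝ) (hl : 2 ≤ l) (h : (a + l * b) ^ 2 + b ^ 2 < a ^ 2 + b ^ 2) :
    a ^ 2 + b ^ 2 < (a - l * b) ^ 2 + b ^ 2 := by
  nlinarith [sq_nonneg (l * b)]

theorem sc2 (l a b : ℝ) (hl : 2 ≤ l) (h : (a + l * b) ^ 2 + b ^ 2 < a ^ 2 + b ^ 2) :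
    a ^ 2 + b ^ 2 < a ^ 2 + (l * a + b) ^ 2 := by
  have h1 : l * (b * (2 * a + l * b)) < 0 := by nlinarith
  have h2 : b * (2 * a + l * b) < 0 := by
    by_contra hc
    push Not at hc
    have := mul_nonneg (by linarith : (0:ℝ) ≤ l) hc
    linarith
  have h3 : 0 < a * (2 * b + l * a) := by
    have : b ^ 2 < - (a * b) := by nlinarith [sq_nonneg b]
    have : b ^ 2 < a ^ 2 := by nlinarith [sq_nonneg (a + b)]
    nlinarith [sq_nonneg (a + b), sq_nonneg (2 * a + l * b), sq_nonneg (l*a+2*b)]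
  nlinarith [mul_pos (by linarith : (0:ℝ) < l) h3]

theorem sc3 (l a b : ℝ) (hl : 2 ≤ l) (h : (a + l * b) ^ 2 + b ^ 2 < a ^ 2 + b ^ 2) :
    a ^ 2 + b ^ 2 < a ^ 2 + (- l * a + b) ^ 2 := by
  have h1 : l * (b * (2 * a + l * b)) < 0 := by nlinarith
  have h2 : b * a < 0 := by
    by_contra hc
    push Not at hc
    have := mul_nonneg (by linarith : (0:ℝ) ≤ l) hc
    nlinarith [sq_nonneg (l * b)]
  nlinarith [mul_pos (by linarith : (0:ℝ) < l) (neg_pos.2 h2), sq_nonneg (l * a)]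

theorem key (l : ℝ) (hl : 2 ≤ l) (y : Fin 2 → ℝ) (a b : F2) (ha : a ∈ gens) (hb : b ∈ gens)
    (hab : a ≠ b) (h : qq (act l a y) < qq y) : qq y < qq (act l b y) := by
  have hy : qq y = y 0 ^ 2 + y 1 ^ 2 := rfl
  have s1 := sc1 l (y 0) (y 1) hl
  have s2 := sc2 l (y 0) (y 1) hl
  have s3 := sc3 l (y 0) (y 1) hl
  have t1 := sc1 l (y 0) (-y 1) hl
  have t2 := sc2 l (y 0) (-y 1) hl
  have t3 := sc3 l (y 0) (-y 1) hl
  have u1 := sc1 l (y 1) (y 0) hl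
  have u2 := sc2 l (y 1) (y 0) hl
  have u3 := sc3 l (y 1) (y 0) hl
  have v1 := sc1 l (y 1) (-y 0) hl
  have v2 := sc2 l (y 1) (-y 0) hl
  have v3 := sc3 l (y 1) (-y 0) hl
  ring_nf at s1 s2 s3 t1 t2 t3 u1 u2 u3 v1 v2 v3
  rcases ha with rfl | rfl | rfl | rfl <;> rcases hb with rfl | rfl | rfl | rfl <;>
    first
    | exact absurd rfl hab
    | (simp only [qq_gh, qq_gv, qq_ghi, qq_gvi, hy] at h ⊢
       ring_nf at h ⊢
       first
       | (have := s1 (by linarith); linarith)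
       | (have := s2 (by linarith); linarith)
       | (have := s3 (by linarith); linarith)
       | (have := t1 (by linarith); linarith)
       | (have := t2 (by linarith); linarith)
       | (have := t3 (by linarith); linarith)
       | (have := u1 (by linarith); linarith)
       | (have := u2 (by linarith); linarith)
       | (have := u3 (by linarith); linarith)
       | (have := v1 (by linarith); linarith)
       | (have := v2 (by linarith); linarith)
       | (have := v3 (by linarith); linarith))

theorem gens_inv (a : F2) (ha : a ∈ gens) : a⁻¹ ∈ gens := by
  rcases ha with rfl | rfl | rfl | rfl <;> simp [gens]

theorem act_inv' (l : ℝ) (a : F2) (y : Fin 2 → ℝ) : act l a⁻¹ (act l a y) = y := by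
  rw [← act_mul', inv_mul_cancel, act_one']

open Classical in
def tt (l : ℝ) (y : Fin 2 → ℝ) : F2 :=
  if h : ∃ w, w ∈ gens ∧ qq (act l w y) < qq y then h.choose else 1

def TT (l : ℝ) (y : Fin 2 → ℝ) : Fin 2 → ℝ := act l (tt l y) y

theorem tt_eq (l : ℝ) (hl : 2 ≤ l) (y : Fin 2 → ℝ) (w : F2) (hw : w ∈ gens)
    (h : qq (act l w y) < qq y) : tt l y = w := by
  have hex : ∃ w, w ∈ gens ∧ qq (act l w y) < qq y := ⟨w, hw, h⟩
  rw [tt, dif_pos hex]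
  by_contra hne
  have := key l hl y _ w hex.choose_spec.1 hw hne hex.choose_spec.2
  linarith

theorem TT_fix (l : ℝ) (y : Fin 2 → ℝ) (h : ¬ ∃ w, w ∈ gens ∧ qq (act l w y) < qq y) :
    TT l y = y := by
  rw [TT, tt, dif_neg h, act_one']

theorem TT_le (l : ℝ) (y : Fin 2 → ℝ) : qq (TT l y) ≤ qq y := by
  by_cases h : ∃ w, w ∈ gens ∧ qq (act l w y) < qq y
  · rw [TT, tt, dif_pos h]; exact h.choose_spec.2.le
  · rw [TT_fix l y h]

theorem step (l : ℝ) (hl : 2 ≤ l) (g w : F2) (hw : w ∈ gens)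
    (ih : ∀ y, ∃ i, qq ((TT l)^[i] y) ≤ qq (act l g y)) (y : Fin 2 → ℝ) :
    ∃ i, qq ((TT l)^[i] y) ≤ qq (act l (g * w) y) := by
  rw [act_mul']
  obtain ⟨i, hi⟩ := ih (act l w y)
  rcases lt_trichotomy (qq (act l w y)) (qq y) with h | h | h
  · refine ⟨i + 1, ?_⟩
    rwa [Function.iterate_succ_apply, TT, tt_eq l hl y w hw h]
  · refine ⟨0, ?_⟩
    have hfix : TT l (act l w y) = act l w y := by
      apply TT_fix
      rintro ⟨a, ha, hlt⟩
      by_cases haw : a = w⁻¹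
      · subst haw; rw [act_inv'] at hlt; linarith
      · have := key l hl _ a w⁻¹ ha (gens_inv w hw) haw hlt
        rw [act_inv'] at this; linarith
    rw [Function.iterate_fixed hfix] at hi
    simpa [← h] using hi
  · have hT : TT l (act l w y) = y := by
      rw [TT, tt_eq l hl _ w⁻¹ (gens_inv w hw) (by rwa [act_inv']), act_inv']
    cases i with
    | zero => exact ⟨0, by simp at hi ⊢; linarith⟩
    | succ i => exact ⟨i, by rwa [Function.iterate_succ_apply, hT] at hi⟩

theorem greedy (l : ℝ) (hl : 2 ≤ l) (g : F2) :
    ∀ y, ∃ i, qq ((TT l)^[i] y) ≤ qq (act l g y) := by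
  have : ∀ L : List (Bool × Bool), ∀ y, ∃ i, qq ((TT l)^[i] y) ≤ qq (act l (FreeGroup.mk L) y) := by
    intro L
    induction L using List.reverseRecOn with
    | nil => intro y; refine ⟨0, ?_⟩; rw [← FreeGroup.one_eq_mk, act_one']; simp
    | append_singleton L w ih =>
      rw [← FreeGroup.mul_mk]
      apply step l hl _ _ _ ih
      rcases w with ⟨_ | _, _ | _⟩ <;> simp [gens, gh, gv, FreeGroup.of, FreeGroup.inv_mk, FreeGroup.invRev]
  have h := this g.toWord
  rwa [FreeGroup.mk_toWord] at h

def ray (l : ℝ) (x : Fin 2 → ℝ) : ℕ → F2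
  | 0 => 1
  | n + 1 => tt l (act l (ray l x n) x) * ray l x n

theorem act_ray (l : ℝ) (x : Fin 2 → ℝ) (n : ℕ) : act l (ray l x n) x = (TT l)^[n] x := by
  induction n with
  | zero => simp [ray, act_one']
  | succ n ih => rw [ray, act_mul', Function.iterate_succ_apply', ← ih, TT]

theorem qq_pos (l : ℝ) (x : Fin 2 → ℝ) (hx : x ∈ Circ) (g : F2) : 0 < qq (act l g x) := by
  by_contra h
  have h0 : act l g x = 0 := by
    unfold qq at h
    ext i
    fin_cases i
    · simp; nlinarith [sq_nonneg (act l g x 0), sq_nonneg (act l g x 1)]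
    · simp; nlinarith [sq_nonneg (act l g x 0), sq_nonneg (act l g x 1)]
  have h1 := act_inv' l g x
  rw [h0, act_zero'] at h1
  rw [← h1] at hx
  simp [Circ, nrm] at hx

theorem nrm_pos' (l : ℝ) (x : Fin 2 → ℝ) (hx : x ∈ Circ) (g : F2) : 0 < nrm (act l g x) :=
  Real.sqrt_pos.2 (qq_pos l x hx g)

theorem anti_ray (l : ℝ) (hl : 2 ≤ l) (x : Fin 2 → ℝ) (hx : x ∈ Circ) (g : ℕ → F2)
    (hg : IsGeodesicRay g) (hs : IsShrinkingSeq l g x) (n : ℕ) :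
    qq (act l (g (n + 1)) x) < qq (act l (g n) x) := by
  obtain ⟨-, h1, h2⟩ := hg
  by_contra hc
  push Not at hc
  have hmono : ∀ k, qq (act l (g (n + k)) x) ≤ qq (act l (g (n + k + 1)) x) := by
    intro k
    induction k with
    | zero => exact hc
    | succ k ih =>
      by_contra hlt
      push Not at hlt
      set m := n + k with hm
      have e1 : g (m + 2) = (g (m + 1 + 1) * (g (m + 1))⁻¹) * g (m + 1) := by group
      have e2 : g m = (g (m + 1) * (g m)⁻¹)⁻¹ * g (m + 1) := by group
      have hne : g (m + 1 + 1) * (g (m + 1))⁻¹ ≠ (g (m + 1) * (g m)⁻¹)⁻¹ := by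
        intro he
        apply h2 m
        rw [e1, he]; group
      have := key l hl (act l (g (m + 1)) x) _ _ (h1 (m + 1)) (gens_inv _ (h1 m)) hne
        (by rw [← act_mul', ← e1]; exact hlt)
      rw [← act_mul', ← e2] at this
      linarith
  have hge : ∀ k, qq (act l (g n) x) ≤ qq (act l (g (n + k)) x) := by
    intro k
    induction k with
    | zero => exact le_rfl
    | succ k ih => exact ih.trans (hmono k)
  have hfin : ∀ M : ℕ, ∃ ε : ℝ, 0 < ε ∧ ∀ i < M, ε ≤ nrm (act l (g i) x) := by
    intro M
    induction M with
    | zero => exact ⟨1, one_pos, by simp⟩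
    | succ M ih =>
      obtain ⟨ε, he, h⟩ := ih
      refine ⟨min ε (nrm (act l (g M) x)), lt_min he (nrm_pos' l x hx _), ?_⟩
      intro i hi
      rcases Nat.lt_succ_iff_lt_or_eq.1 hi with h' | rfl
      · exact (min_le_left _ _).trans (h i h')
      · exact min_le_right _ _
  obtain ⟨ε, he, h⟩ := hfin (n + 1)
  obtain ⟨i, hi⟩ := hs ε he
  rcases lt_or_ge i (n + 1) with h' | h'
  · exact absurd (h i h') (not_le.2 hi)
  · obtain ⟨k, rfl⟩ := Nat.exists_eq_add_of_le (by omega : n ≤ i)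
    have := (nrm_le_iff' _ _).2 (hge k)
    have := h n (by omega)
    linarith

theorem ray_unique (l : ℝ) (hl : 2 ≤ l) (x : Fin 2 → ℝ) (hx : x ∈ Circ) (g : ℕ → F2)
    (hg : IsGeodesicRay g) (hs : IsShrinkingSeq l g x) : g = ray l x := by
  funext n
  induction n with
  | zero => exact hg.1
  | succ n ih =>
    have e : g (n + 1) = (g (n + 1) * (g n)⁻¹) * g n := by group
    have := anti_ray l hl x hx g hg hs n
    rw [e, act_mul'] at this
    rw [ray, ← ih, tt_eq l hl _ _ (hg.2.1 n) this]
    exact e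

theorem ray_shrinks (l : ℝ) (hl : 2 ≤ l) (x : Fin 2 → ℝ) (hshr : Shrinkable l x) :
    IsShrinkingSeq l (ray l x) x := by
  intro ε he
  obtain ⟨g, hg⟩ := hshr ε he
  obtain ⟨i, hi⟩ := greedy l hl g x
  rw [← act_ray] at hi
  exact ⟨i, ((nrm_le_iff' _ _).2 hi).trans_lt hg⟩

theorem ray_exists (l : ℝ) (hl : 2 ≤ l) (x : Fin 2 → ℝ) (hx : x ∈ Circ) (hshr : Shrinkable l x)
    (n : ℕ) : ∃ w, w ∈ gens ∧ qq (act l w (act l (ray l x n) x)) < qq (act l (ray l x n) x) := by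
  by_contra hc
  have hfix := TT_fix l _ hc
  have hmono : Antitone fun i => qq (act l (ray l x i) x) := by
    apply antitone_nat_of_succ_le
    intro i
    rw [act_ray, act_ray, Function.iterate_succ_apply']
    exact TT_le l _
  obtain ⟨i, hi⟩ := ray_shrinks l hl x hshr _ (nrm_pos' l x hx (ray l x n))
  rw [nrm_lt_iff'] at hi
  rcases le_total i n with h | h
  · have := hmono h
    simp only at this
    linarith
  · obtain ⟨k, rfl⟩ := Nat.exists_eq_add_of_le h
    rw [act_ray, add_comm n k, Function.iterate_add_apply, ← act_ray l x n,
      Function.iterate_fixed hfix] at hi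
    exact lt_irrefl _ hi

theorem ray_geod (l : ℝ) (hl : 2 ≤ l) (x : Fin 2 → ℝ) (hx : x ∈ Circ) (hshr : Shrinkable l x) :
    IsGeodesicRay (ray l x) := by
  have hlt : ∀ n, qq (act l (ray l x (n + 1)) x) < qq (act l (ray l x n) x) := by
    intro n
    obtain ⟨w, hw, h⟩ := ray_exists l hl x hx hshr n
    rw [ray, act_mul', tt_eq l hl _ w hw h]
    exact h
  refine ⟨rfl, ?_, ?_⟩
  · intro n
    obtain ⟨w, hw, h⟩ := ray_exists l hl x hx hshr n
    rw [ray, tt_eq l hl _ w hw h, mul_inv_cancel_right]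
    exact hw
  · intro n he
    have h1 := hlt n
    have h2 := hlt (n + 1)
    rw [mul_inv_eq_one] at he
    rw [show n + 1 + 1 = n + 2 from rfl, he] at h2
    linarith

theorem stmt5 (l : ℝ) (hl : 2 ≤ l) (x : Fin 2 → ℝ) (hx : x ∈ Circ)
    (hshr : Shrinkable l x) :
    (∃! g : ℕ → F2, IsGeodesicRay g ∧ IsShrinkingSeq l g x) ∧
    ∀ g : ℕ → F2, IsGeodesicRay g → IsShrinkingSeq l g x →
      StrictAnti fun i => nrm (act l (g i) x) := by
  refine ⟨⟨ray l x, ⟨ray_geod l hl x hx hshr, ray_shrinks l hl x hshr⟩, ?_⟩, ?_⟩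
  · rintro g ⟨hg, hs⟩
    exact ray_unique l hl x hx g hg hs
  · intro g hg hs
    apply strictAnti_nat_of_succ_lt
    intro n
    exact (nrm_lt_iff' _ _).2 (anti_ray l hl x hx g hg hs n)
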